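/- arXiv:1506.06304 — 2 statements merged into one kernel-verified Lean document; each statement's English description precedes it below -/
import Mathlib

section
/- For any constants v_+ > v_− > 0, u_− > u_+ and s > 0 satisfying the Rankine–Hugoniot conditions and the entropy condition u_+ < u_−, there exists a 2-viscous shock wave (V, U) connecting (v_−, u_−) to (v_+, u_+), unique up to translation of the argument, and it satisfies for all ξ ∈ ℝ: v_− < V(ξ) < v_+, u_+ < U(ξ) < u_−, h(V(ξ)) > 0 and V′(ξ) = V(ξ)h(V(ξ))/(sμ) > 0. Moreover there is a constant C > 0 such that |V(ξ) − v_+| + |U(ξ) − u_+| ≤ Cδe^{−c_+ξ} and |V′(ξ)| + |U′(ξ)| + |V″(ξ)| + |U″(ξ)| ≤ Cδ²e^{−c_+ξ} for all ξ ≥ 0, and |V(ξ) − v_−| + |U(ξ) − u_−| ≤ Cδe^{c_−ξ} and |V′(ξ)| + |U′(ξ)| + |V″(ξ)| + |U″(ξ)| ≤ Cδ²e^{c_−ξ} for all ξ ≤ 0, where c_± = v_±|p′(v_±) + s²|/(sμ) > 0. If v_− and v_+ are regarded as fixed, C can be chosen depending only on γ, μ, v_±, and both c_±/δ and δ/c_±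 are bounded above by constants depending only on γ, μ, v_±. -/
open Real Filter

/-- A 2-viscous shock wave profile connecting `(vm, um)` to `(vp, up)` with speed `s`,
for the pressure `p(v) = v^(−γ)` and viscosity `μ`. -/
def IsShockProfile (γ μ vm vp um up s : ℝ) (V U : ℝ → ℝ) : Prop :=
  ContDiff ℝ 2 V ∧ ContDiff ℝ 2 U ∧
  (∀ ξ, 0 < V ξ) ∧
  (∀ ξ, U ξ - up = -(s * (V ξ - vp))) ∧
  (∀ ξ, U ξ - um = -(s * (V ξ - vm))) ∧
  (∀ ξ, s * μ * deriv V ξ / V ξ =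
    -(s ^ 2 * (V ξ - vm)) - (V ξ ^ (-γ) - vm ^ (-γ))) ∧
  Tendsto V atBot (nhds vm) ∧ Tendsto V atTop (nhds vp)

/-!
Eliminating `U` turns the profile equations into the scalar equation `V' = F(V)` with
`F(V) = V h(V) / (s μ)`. Strict convexity of the pressure makes `h` strictly concave, so `h` is
positive between its two zeros `v_±`, and both zeros are nondegenerate: `F'(v_-) = c_-` and
`F'(v_+) = -c_+`. Such a field is positive on `(v_-, v_+)` and needs infinite time to reach either
zero, whence a global orbit joining them; any two orbits cross a common level and therefore differ
by a translation. The gap `y = v_+ - V` satisfies both `y' ≤ -k y` and `y' ≤ -c_+ y + K y²`, which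
together give decay at exactly the linearized rate `c_+`; the left end state is the mirror image
under `t ↦ -V(-t)`.
-/

open Set
open scoped NNReal Topology

/-! ### Existence and uniqueness of scalar heteroclinic orbits -/

lemma exists_orderIso_of_le_deriv {W w : ℝ → ℝ} {c : ℝ} (hc : 0 < c)
    (hW : ∀ t, HasDerivAt W (w t) t) (hw : ∀ t, c ≤ w t) : ∃ e : ℝ ≃o ℝ, ⇑e = W := by
  have hmono : StrictMono W := strictMono_of_hasDerivAt_pos hW fun t => hc.trans_le (hw t)
  have hgrowth : ∀ x y, x ≤ y → c * (y - x) ≤ W y - W x :=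
    mul_sub_le_image_sub_of_le_deriv (fun t => (hW t).differentiableAt)
      fun t => (hw t).trans_eq (hW t).deriv.symm
  have hcont : Continuous W := continuous_iff_continuousAt.2 fun t => (hW t).continuousAt
  have hsurj : Function.Surjective W := by
    refine hcont.surjective
      (tendsto_atTop_mono' _ ?_
        (tendsto_atTop_add_const_left _ (W 0) (tendsto_id.const_mul_atTop hc)))
      (tendsto_atBot_mono' _ ?_
        (tendsto_atBot_add_const_left _ (W 0) (tendsto_id.const_mul_atBot hc)))
    · filter_upwards [eventually_ge_atTop 0] with t ht
      simp only [id]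
      linarith [hgrowth 0 t ht]
    · filter_upwards [eventually_le_atBot 0] with t ht
      simp only [id]
      linarith [hgrowth t 0 ht]
  exact ⟨hmono.orderIsoOfSurjective W hsurj, rfl⟩

-- The orbit is the inverse of the travel time `W t = ∫ x in 0..t, 1 / F x`.
lemma exists_orderIso_isIntegralCurve {F : ℝ → ℝ} {M : ℝ} (hF : Continuous F)
    (hpos : ∀ x, 0 < F x) (hM : ∀ x, F x ≤ M) :
    ∃ e : ℝ ≃o ℝ, IsIntegralCurve e fun _ => F := by
  have hinv : Continuous fun x => (F x)⁻¹ := hF.inv₀ fun x => (hpos x).ne'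
  have htime : ∀ t, HasDerivAt (fun t => ∫ x in (0 : ℝ)..t, (F x)⁻¹) (F t)⁻¹ t := fun t =>
    (hinv.integral_hasStrictDerivAt 0 t).hasDerivAt
  obtain ⟨e, he⟩ := exists_orderIso_of_le_deriv (inv_pos.2 ((hpos 0).trans_le (hM 0))) htime
    fun t => inv_anti₀ (hpos t) (hM t)
  refine ⟨e.symm, fun t => ?_⟩
  have hderiv : HasDerivAt e (F (e.symm t))⁻¹ (e.symm t) := he ▸ htime _
  simpa using HasDerivAt.of_local_left_inverse e.symm.continuous.continuousAt hderiv
    (inv_pos.2 (hpos _)).ne' (Eventually.of_forall e.apply_symm_apply)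

/-- `V` is a heteroclinic orbit of the autonomous scalar equation `V' = f(V)`, travelling from the
rest point `a` to the rest point `b`. -/
structure IsHeteroclinicOrbit (f : ℝ → ℝ) (a b : ℝ) (V : ℝ → ℝ) : Prop where
  isIntegralCurve : IsIntegralCurve V fun _ => f
  tendsto_atBot : Tendsto V atBot (𝓝 a)
  tendsto_atTop : Tendsto V atTop (𝓝 b)

lemma add_mul_sigmoid_mem_Ioo {a b : ℝ} (hab : a < b) (x : ℝ) :
    a + (b - a) * sigmoid x ∈ Ioo a b :=
  ⟨by nlinarith [sigmoid_pos x], by nlinarith [sigmoid_lt_one x]⟩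

lemma le_two_mul_of_lipschitzOnWith_Icc {f : ℝ → ℝ} {a b : ℝ} {L : ℝ≥0} (hab : a < b)
    (hf : LipschitzOnWith L f (Icc a b)) (ha : f a = 0) (hb : f b = 0) {σ : ℝ}
    (hσ : σ ∈ Icc (0 : ℝ) 1) :
    f (a + (b - a) * σ) ≤ 2 * L * ((b - a) * (σ * (1 - σ))) := by
  obtain ⟨h0, h1⟩ := hσ
  have hv : a + (b - a) * σ ∈ Icc a b := ⟨by nlinarith, by nlinarith⟩
  have hleft := hf.dist_le_mul _ hv _ (left_mem_Icc.2 hab.le)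
  have hright := hf.dist_le_mul _ hv _ (right_mem_Icc.2 hab.le)
  rw [ha, dist_zero_right, Real.dist_eq, abs_of_nonneg (sub_nonneg.2 hv.1)] at hleft
  rw [hb, dist_zero_right, dist_comm, Real.dist_eq, abs_of_nonneg (sub_nonneg.2 hv.2)] at hright
  have hle := le_norm_self (f (a + (b - a) * σ))
  nlinarith [mul_le_mul_of_nonneg_left (hle.trans hleft) (sub_nonneg.2 h1),
    mul_le_mul_of_nonneg_left (hle.trans hright) h0]

-- In the logistic coordinate `V = a + (b - a) σ(θ)` the field becomes positive and bounded on the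
-- whole line, because `f` is Lipschitz and vanishes at both ends.
theorem exists_isHeteroclinicOrbit {f : ℝ → ℝ} {a b : ℝ} {L : ℝ≥0} (hab : a < b)
    (hf : LipschitzOnWith L f (Icc a b)) (ha : f a = 0) (hb : f b = 0)
    (hpos : ∀ v ∈ Ioo a b, 0 < f v) :
    ∃ V, IsHeteroclinicOrbit f a b V ∧ ∀ t, V t ∈ Ioo a b := by
  let φ : ℝ → ℝ := fun x => a + (b - a) * sigmoid x
  let φ' : ℝ → ℝ := fun x => (b - a) * (sigmoid x * (1 - sigmoid x))
  have hφ : ∀ x, HasDerivAt φ (φ' x) x := fun x =>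
    ((hasDerivAt_sigmoid x).const_mul _).const_add _
  have hφmem : ∀ x, φ x ∈ Ioo a b := add_mul_sigmoid_mem_Ioo hab
  have hφpos : ∀ x, 0 < φ' x := fun x =>
    mul_pos (sub_pos.2 hab) (mul_pos (sigmoid_pos x) (sub_pos.2 (sigmoid_lt_one x)))
  have hφcont : Continuous φ := by have := continuous_sigmoid; fun_prop
  have hφcont' : Continuous φ' := by have := continuous_sigmoid; fun_prop
  obtain ⟨θ, hθ⟩ := exists_orderIso_isIntegralCurve (F := fun x => f (φ x) / φ' x) (M := 2 * L)
    ((hf.continuousOn.comp_continuous hφcont fun x => Ioo_subset_Icc_self (hφmem x)).div hφcont'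
      fun x => (hφpos x).ne')
    (fun x => div_pos (hpos _ (hφmem x)) (hφpos x))
    (fun x => (div_le_iff₀ (hφpos x)).2 <| le_two_mul_of_lipschitzOnWith_Icc hab hf ha hb
      ⟨sigmoid_nonneg x, sigmoid_le_one x⟩)
  refine ⟨φ ∘ θ, ⟨fun t => ?_, ?_, ?_⟩, fun t => hφmem _⟩
  · exact ((hφ (θ t)).comp t (hθ t)).congr_deriv (mul_div_cancel₀ _ (hφpos _).ne')
  · simpa [φ, Function.comp_def] using
      ((tendsto_sigmoid_atBot.comp θ.tendsto_atBot).const_mul (b - a)).const_add a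
  · simpa [φ, Function.comp_def] using
      ((tendsto_sigmoid_atTop.comp θ.tendsto_atTop).const_mul (b - a)).const_add a

theorem isIntegralCurve_unique_of_locallyLipschitzOn {E : Type*} [NormedAddCommGroup E]
    [NormedSpace ℝ E] {f : E → E} {s : Set E} {V W : ℝ → E} {t₀ : ℝ}
    (hf : LocallyLipschitzOn s f) (hV : IsIntegralCurve V fun _ => f)
    (hW : IsIntegralCurve W fun _ => f) (hVs : ∀ t, V t ∈ s) (hWs : ∀ t, W t ∈ s)
    (h₀ : V t₀ = W t₀) : V = W := by
  ext t
  let I := Icc (min t t₀ - 1) (max t t₀ + 1)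
  have hcompact : IsCompact (V '' I ∪ W '' I) :=
    (isCompact_Icc.image hV.continuous).union (isCompact_Icc.image hW.continuous)
  have hsub : V '' I ∪ W '' I ⊆ s :=
    union_subset (image_subset_iff.2 fun t _ => hVs t) (image_subset_iff.2 fun t _ => hWs t)
  obtain ⟨K, hK⟩ := (hf.mono hsub).exists_lipschitzOnWith_of_compact hcompact
  have hmem : ∀ x, min t t₀ ≤ x → x ≤ max t t₀ → x ∈ Ioo (min t t₀ - 1) (max t t₀ + 1) :=
    fun x hmin hmax => ⟨by linarith, by linarith⟩
  exact ODE_solution_unique_of_mem_Ioo (v := fun _ => f) (s := fun _ => V '' I ∪ W '' I)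
    (fun _ _ => hK) (hmem t₀ (min_le_right _ _) (le_max_right _ _))
    (fun x hx => ⟨hV x, .inl (mem_image_of_mem V (Ioo_subset_Icc_self hx))⟩)
    (fun x hx => ⟨hW x, .inr (mem_image_of_mem W (Ioo_subset_Icc_self hx))⟩)
    h₀ (hmem t (min_le_left _ _) (le_max_left _ _))

namespace IsHeteroclinicOrbit

variable {f : ℝ → ℝ} {a b : ℝ} {V W : ℝ → ℝ}

lemma Ioo_subset_range (hV : IsHeteroclinicOrbit f a b V) : Ioo a b ⊆ range V := fun _ hc =>
  mem_range_of_exists_le_of_exists_ge hV.isIntegralCurve.continuous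
    ((hV.tendsto_atBot.eventually (Iic_mem_nhds hc.1)).exists)
    ((hV.tendsto_atTop.eventually (Ici_mem_nhds hc.2)).exists)

theorem exists_translation {s : Set ℝ} (hV : IsHeteroclinicOrbit f a b V)
    (hW : IsHeteroclinicOrbit f a b W) (hab : a < b) (hf : LocallyLipschitzOn s f)
    (hVs : ∀ t, V t ∈ s) (hWs : ∀ t, W t ∈ s) : ∃ τ, ∀ t, W t = V (t + τ) := by
  obtain ⟨c, hc⟩ := exists_between hab
  obtain ⟨x, hx⟩ := hV.Ioo_subset_range hc
  obtain ⟨y, hy⟩ := hW.Ioo_subset_range hc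
  have hcross : W y = (V ∘ (· + (x - y))) y := by simp [hx, hy]
  exact ⟨x - y, congrFun <| isIntegralCurve_unique_of_locallyLipschitzOn hf hW.isIntegralCurve
    (hV.isIntegralCurve.comp_add (x - y)) hWs (fun t => hVs _) hcross⟩

end IsHeteroclinicOrbit

/-! ### Convergence at the linearized rates -/

lemma isIntegralCurve_neg_comp_neg {E : Type*} [NormedAddCommGroup E] [NormedSpace ℝ E]
    {f : E → E} {V : ℝ → E} (hV : IsIntegralCurve V fun _ => f) :
    IsIntegralCurve (fun t => -V (-t)) fun _ v => f (-v) := fun t => by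
  have h := ((hV (-t)).scomp t (hasDerivAt_neg t)).neg
  exact h.congr_deriv (by simp)

lemma abs_sub_sub_deriv_mul_le {f : ℝ → ℝ} {s : Set ℝ} {L : ℝ≥0} (hs : Convex ℝ s)
    (hf : ∀ x ∈ s, DifferentiableAt ℝ f x) (hL : LipschitzOnWith L (deriv f) s) {x y : ℝ}
    (hx : x ∈ s) (hy : y ∈ s) : |f y - f x - deriv f x * (y - x)| ≤ L * (y - x) ^ 2 := by
  have hsub : uIcc x y ⊆ s := hs.ordConnected.uIcc_subset hx hy
  have hderiv : ∀ z ∈ uIcc x y, HasDerivWithinAt (fun z => f z - deriv f x * z)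
      (deriv f z - deriv f x) (uIcc x y) z := fun z hz => by
    simpa using ((hf z (hsub hz)).hasDerivAt.fun_sub
      ((hasDerivAt_id z).const_mul (deriv f x))).hasDerivWithinAt
  have hbound : ∀ z ∈ uIcc x y, ‖deriv f z - deriv f x‖ ≤ L * |y - x| := fun z hz => by
    rw [← dist_eq_norm]
    refine (hL.dist_le_mul _ (hsub hz) _ hx).trans ?_
    gcongr
    exact abs_sub_left_of_mem_uIcc hz
  have hmvt := (convex_uIcc x y).norm_image_sub_le_of_norm_hasDerivWithin_le hderiv hbound
    left_mem_uIcc right_mem_uIcc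
  calc |f y - f x - deriv f x * (y - x)|
      = ‖f y - deriv f x * y - (f x - deriv f x * x)‖ := by rw [Real.norm_eq_abs]; ring_nf
    _ ≤ L * |y - x| * ‖y - x‖ := hmvt
    _ = L * (y - x) ^ 2 := by rw [Real.norm_eq_abs, mul_assoc, abs_mul_abs_self, sq]

lemma exists_mul_sub_le_of_deriv_neg {f : ℝ → ℝ} {c b : ℝ} (hcb : c ≤ b)
    (hf : ContinuousOn f (Icc c b)) (hb : f b = 0) (hdiff : DifferentiableAt ℝ f b)
    (hderiv : deriv f b < 0) (hpos : ∀ v ∈ Ico c b, 0 < f v) :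
    ∃ k > 0, ∀ v ∈ Icc c b, k * (b - v) ≤ f v := by
  have hslope : ∀ v, (b - v) * -dslope f b v = f v := fun v => by
    have h := sub_smul_dslope f b v
    rw [hb, smul_eq_mul] at h
    linarith
  have hcont : ContinuousOn (fun v => -dslope f b v) (Icc c b) := fun v hv => by
    rcases eq_or_ne v b with rfl | hne
    · exact (continuousAt_dslope_same.2 hdiff).continuousWithinAt.neg
    · exact ((continuousWithinAt_dslope_of_ne hne).2 (hf v hv)).neg
  have hslope_pos : ∀ v ∈ Icc c b, 0 < -dslope f b v := fun v hv => by
    rcases hv.2.eq_or_lt with rfl | hlt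
    · simpa using hderiv
    · exact pos_of_mul_pos_right ((hpos v ⟨hv.1, hlt⟩).trans_eq (hslope v).symm)
        (sub_nonneg.2 hv.2)
  obtain ⟨w, hw, hmin⟩ := isCompact_Icc.exists_isMinOn (nonempty_Icc.2 hcb) hcont
  refine ⟨-dslope f b w, hslope_pos w hw, fun v hv => ?_⟩
  calc -dslope f b w * (b - v) ≤ -dslope f b v * (b - v) :=
        mul_le_mul_of_nonneg_right (hmin hv) (sub_nonneg.2 hv.2)
    _ = f v := by rw [mul_comm, hslope]

-- `log y + (K / k) y + c t` is nonincreasing: the crude rate `k` makes the quadratic error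
-- integrable, so that the sharp rate `c` survives.
lemma le_mul_exp_neg_of_deriv_le {y y' : ℝ → ℝ} {c k K : ℝ} (hk : 0 < k) (hK : 0 ≤ K)
    (hderiv : ∀ t ≥ 0, HasDerivAt y (y' t) t) (hpos : ∀ t ≥ 0, 0 < y t)
    (hlin : ∀ t ≥ 0, y' t ≤ -(k * y t)) (hquad : ∀ t ≥ 0, y' t ≤ -(c * y t) + K * y t ^ 2)
    {t : ℝ} (ht : 0 ≤ t) : y t ≤ y 0 * exp (K / k * y 0) * exp (-(c * t)) := by
  let Λ : ℝ → ℝ := fun t => log (y t) + K / k * y t + c * t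
  have hΛ : ∀ t ≥ 0, HasDerivAt Λ (y' t / y t + K / k * y' t + c) t := fun t ht => by
    simpa using
      (((hderiv t ht).log (hpos t ht).ne').fun_add ((hderiv t ht).const_mul (K / k))).fun_add
        ((hasDerivAt_id t).const_mul c)
  have hΛ_nonpos : ∀ t ≥ 0, y' t / y t + K / k * y' t + c ≤ 0 := fun t ht => by
    have hlog : y' t / y t ≤ -c + K * y t :=
      (div_le_iff₀ (hpos t ht)).2 ((hquad t ht).trans_eq (by ring))
    have hcorr : K / k * y' t ≤ -(K * y t) :=
      (mul_le_mul_of_nonneg_left (hlin t ht) (div_nonneg hK hk.le)).trans_eq (by field_simp)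
    linarith
  have hanti : AntitoneOn Λ (Ici 0) :=
    antitoneOn_of_hasDerivWithinAt_nonpos (convex_Ici 0)
      (fun t ht => (hΛ t ht).continuousAt.continuousWithinAt)
      (fun t ht => (hΛ t (interior_subset ht)).hasDerivWithinAt)
      fun t ht => hΛ_nonpos t (interior_subset ht)
  have hle : Λ t ≤ Λ 0 := hanti self_mem_Ici ht ht
  have hKy : 0 ≤ K / k * y t := mul_nonneg (div_nonneg hK hk.le) (hpos t ht).le
  calc y t = exp (log (y t)) := (exp_log (hpos t ht)).symm
    _ ≤ exp (log (y 0) + K / k * y 0 + -(c * t)) := by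
      simp only [Λ] at hle
      exact exp_le_exp.2 (by linarith)
    _ = y 0 * exp (K / k * y 0) * exp (-(c * t)) := by
      rw [exp_add, exp_add, exp_log (hpos 0 le_rfl)]

/-- `f` is a `C²` field that is positive between two consecutive nondegenerate zeros `a < b`, so
that `V' = f(V)` drives every point of `(a, b)` from `a` to `b`. Smoothness is required at the end
points from both sides, so that `deriv f a` and `deriv f b` are the linearized rates. -/
structure IsConnectingField (f : ℝ → ℝ) (a b : ℝ) : Prop where
  lt : a < b
  contDiffAt : ∀ v ∈ Icc a b, ContDiffAt ℝ 2 f v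
  map_left : f a = 0
  map_right : f b = 0
  pos : ∀ v ∈ Ioo a b, 0 < f v
  deriv_left_pos : 0 < deriv f a
  deriv_right_neg : deriv f b < 0

namespace IsConnectingField

variable {f : ℝ → ℝ} {a b : ℝ} {V : ℝ → ℝ}

lemma differentiableAt (hf : IsConnectingField f a b) {v : ℝ} (hv : v ∈ Icc a b) :
    DifferentiableAt ℝ f v :=
  (hf.contDiffAt v hv).differentiableAt two_ne_zero

lemma reflect (hf : IsConnectingField f a b) :
    IsConnectingField (fun v => f (-v)) (-b) (-a) where
  lt := neg_lt_neg hf.lt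
  contDiffAt v hv := (hf.contDiffAt (-v) ⟨le_neg.1 hv.2, neg_le.1 hv.1⟩).comp v contDiffAt_id.neg
  map_left := by simpa using hf.map_right
  map_right := by simpa using hf.map_left
  pos v hv := hf.pos (-v) ⟨lt_neg.1 hv.2, neg_lt.1 hv.1⟩
  deriv_left_pos := by simpa [deriv_comp_neg] using hf.deriv_right_neg
  deriv_right_neg := by simpa [deriv_comp_neg] using hf.deriv_left_pos

lemma exists_lipschitzOnWith (hf : IsConnectingField f a b) :
    ∃ L, LipschitzOnWith L f (Icc a b) :=
  ContDiffOn.exists_lipschitzOnWith (fun v hv => (hf.contDiffAt v hv).contDiffWithinAt)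
    two_ne_zero (convex_Icc a b) isCompact_Icc

lemma exists_lipschitzOnWith_deriv (hf : IsConnectingField f a b) :
    ∃ L, LipschitzOnWith L (deriv f) (Icc a b) :=
  ContDiffOn.exists_lipschitzOnWith (n := 1)
    (fun v hv => ((hf.contDiffAt v hv).derivWithin (by norm_num)).contDiffWithinAt)
    one_ne_zero (convex_Icc a b) isCompact_Icc

lemma exists_orbit (hf : IsConnectingField f a b) :
    ∃ V, IsHeteroclinicOrbit f a b V ∧ ∀ t, V t ∈ Ioo a b := by
  obtain ⟨L, hL⟩ := hf.exists_lipschitzOnWith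
  exact exists_isHeteroclinicOrbit hf.lt hL hf.map_left hf.map_right hf.pos

lemma hasDerivAt_deriv (hf : IsConnectingField f a b) (hV : IsIntegralCurve V fun _ => f)
    (hmem : ∀ t, V t ∈ Ioo a b) (t : ℝ) : HasDerivAt (deriv V) (deriv f (V t) * f (V t)) t := by
  have hderiv : deriv V = f ∘ V := funext fun t => (hV t).deriv
  exact hderiv ▸ (hf.differentiableAt (Ioo_subset_Icc_self (hmem t))).hasDerivAt.comp t (hV t)

lemma exists_sub_le_exp (hf : IsConnectingField f a b) (hV : IsIntegralCurve V fun _ => f)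
    (hmem : ∀ t, V t ∈ Ioo a b) : ∃ C > 0, ∀ t ≥ 0, b - V t ≤ C * exp (deriv f b * t) := by
  obtain ⟨L, hL⟩ := hf.exists_lipschitzOnWith_deriv
  have hmono : Monotone V := monotone_of_hasDerivAt_nonneg hV fun t => (hf.pos _ (hmem t)).le
  have hsub : Icc (V 0) b ⊆ Icc a b := Icc_subset_Icc_left (hmem 0).1.le
  obtain ⟨k, hk, hlin⟩ := exists_mul_sub_le_of_deriv_neg (hmem 0).2.le
    (fun v hv => (hf.differentiableAt (hsub hv)).continuousAt.continuousWithinAt) hf.map_right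
    (hf.differentiableAt (right_mem_Icc.2 hf.lt.le)) hf.deriv_right_neg
    fun v hv => hf.pos v ⟨(hmem 0).1.trans_le hv.1, hv.2⟩
  have hgap : ∀ t, 0 < b - V t := fun t => sub_pos.2 (hmem t).2
  have htaylor : ∀ t, -f (V t) ≤ -(-deriv f b * (b - V t)) + L * (b - V t) ^ 2 := fun t => by
    have h := abs_sub_sub_deriv_mul_le (convex_Icc a b) (fun _ => hf.differentiableAt) hL
      (right_mem_Icc.2 hf.lt.le) (Ioo_subset_Icc_self (hmem t))
    rw [hf.map_right] at h
    linarith [neg_le_of_abs_le h]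
  refine ⟨(b - V 0) * exp (L / k * (b - V 0)), mul_pos (hgap 0) (exp_pos _), fun t ht => ?_⟩
  simpa using le_mul_exp_neg_of_deriv_le hk L.2 (fun t _ => (hV t).const_sub b)
    (fun t _ => hgap t) (fun t ht => neg_le_neg (hlin _ ⟨hmono ht, (hmem t).2.le⟩))
    (fun t _ => htaylor t) ht

lemma exists_abs_deriv_le (hf : IsConnectingField f a b) (hV : IsIntegralCurve V fun _ => f)
    (hmem : ∀ t, V t ∈ Ioo a b) :
    ∃ M ≥ 0, ∀ t, |deriv V t| + |deriv (deriv V) t| ≤ M * (b - V t) := by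
  obtain ⟨L, hL⟩ := hf.exists_lipschitzOnWith
  refine ⟨L + L * L, by positivity, fun t => ?_⟩
  have hfV : |f (V t)| ≤ L * (b - V t) := by
    have h := hL.dist_le_mul _ (right_mem_Icc.2 hf.lt.le) _ (Ioo_subset_Icc_self (hmem t))
    rwa [hf.map_right, dist_zero_left, Real.norm_eq_abs, Real.dist_eq,
      abs_of_pos (sub_pos.2 (hmem t).2)] at h
  have hf'V : |deriv f (V t)| ≤ L :=
    norm_deriv_le_of_lipschitzOn (Icc_mem_nhds (hmem t).1 (hmem t).2) hL
  rw [(hV t).deriv, (hf.hasDerivAt_deriv hV hmem t).deriv, abs_mul]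
  calc |f (V t)| + |deriv f (V t)| * |f (V t)|
      ≤ L * (b - V t) + L * (L * (b - V t)) := by gcongr
    _ = (L + L * L) * (b - V t) := by ring

lemma exists_decay_right (hf : IsConnectingField f a b) (hV : IsIntegralCurve V fun _ => f)
    (hmem : ∀ t, V t ∈ Ioo a b) :
    ∃ C > 0, ∀ t ≥ 0, |V t - b| ≤ C * exp (deriv f b * t) ∧
      |deriv V t| + |deriv (deriv V) t| ≤ C * exp (deriv f b * t) := by
  obtain ⟨C, hC, hgap⟩ := hf.exists_sub_le_exp hV hmem
  obtain ⟨M, hM, hderiv⟩ := hf.exists_abs_deriv_le hV hmem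
  refine ⟨(1 + M) * C, by positivity, fun t ht => ?_⟩
  have hgap_nonneg : 0 ≤ b - V t := sub_nonneg.2 (hmem t).2.le
  have hbound : (1 + M) * (b - V t) ≤ (1 + M) * C * exp (deriv f b * t) := by
    rw [mul_assoc]
    gcongr
    exact hgap t ht
  rw [abs_sub_comm, abs_of_nonneg hgap_nonneg]
  exact ⟨by nlinarith, by linarith [hderiv t]⟩

lemma exists_decay_left (hf : IsConnectingField f a b) (hV : IsIntegralCurve V fun _ => f)
    (hmem : ∀ t, V t ∈ Ioo a b) :
    ∃ C > 0, ∀ t ≤ 0, |V t - a| ≤ C * exp (deriv f a * t) ∧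
      |deriv V t| + |deriv (deriv V) t| ≤ C * exp (deriv f a * t) := by
  obtain ⟨C, hC, hdecay⟩ := hf.reflect.exists_decay_right (isIntegralCurve_neg_comp_neg hV)
    fun t => ⟨neg_lt_neg (hmem _).2, neg_lt_neg (hmem _).1⟩
  have hderiv : deriv (fun t => -V (-t)) = fun t => deriv V (-t) := by
    ext t
    simp [deriv_comp_neg]
  refine ⟨C, hC, fun t ht => ?_⟩
  have h := hdecay (-t) (neg_nonneg.2 ht)
  simpa [hderiv, deriv_comp_neg, neg_add_eq_sub, abs_sub_comm a] using h

theorem exists_decay (hf : IsConnectingField f a b) (hV : IsIntegralCurve V fun _ => f)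
    (hmem : ∀ t, V t ∈ Ioo a b) :
    ∃ C > 0, (∀ t ≥ 0, |V t - b| ≤ C * exp (deriv f b * t) ∧
        |deriv V t| + |deriv (deriv V) t| ≤ C * exp (deriv f b * t)) ∧
      ∀ t ≤ 0, |V t - a| ≤ C * exp (deriv f a * t) ∧
        |deriv V t| + |deriv (deriv V) t| ≤ C * exp (deriv f a * t) := by
  obtain ⟨C, hC, hright⟩ := hf.exists_decay_right hV hmem
  obtain ⟨D, -, hleft⟩ := hf.exists_decay_left hV hmem
  have hCE : ∀ x, C * exp x ≤ max C D * exp x := fun x => by gcongr; exact le_max_left ..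
  have hDE : ∀ x, D * exp x ≤ max C D * exp x := fun x => by gcongr; exact le_max_right ..
  exact ⟨max C D, lt_max_of_lt_left hC,
    fun t ht => ⟨(hright t ht).1.trans (hCE _), (hright t ht).2.trans (hCE _)⟩,
    fun t ht => ⟨(hleft t ht).1.trans (hDE _), (hleft t ht).2.trans (hDE _)⟩⟩

end IsConnectingField

lemma contDiff_succ_of_isIntegralCurve {E : Type*} [NormedAddCommGroup E] [NormedSpace ℝ E]
    {f : E → E} {V : ℝ → E} {n : ℕ} (hV : IsIntegralCurve V fun _ => f)
    (hf : ∀ t, ContDiffAt ℝ n f (V t)) : ContDiff ℝ (n + 1) V := by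
  have hderiv : deriv V = f ∘ V := funext fun t => (hV t).deriv
  have hbootstrap : ∀ {m : ℕ}, m ≤ n → ContDiff ℝ m V → ContDiff ℝ (m + 1) V := fun hm hVm =>
    contDiff_succ_iff_deriv.2 ⟨fun t => (hV t).differentiableAt, by simp,
      hderiv ▸ contDiff_iff_contDiffAt.2 fun t =>
        ((hf t).of_le (by exact_mod_cast hm)).comp t hVm.contDiffAt⟩
  have hVm : ∀ m : ℕ, m ≤ n → ContDiff ℝ m V := fun m => by
    induction m with
    | zero => exact fun _ => contDiff_zero.2 hV.continuous
    | succ m ih => exact fun hm => mod_cast hbootstrap (by lia) (ih (by lia))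
  exact hbootstrap le_rfl (hVm n le_rfl)

/-! ### The profile equation -/

/-- The function `h` of the profile equation `s μ V' / V = h(V)`: the height, over `v`, of the
Rayleigh line through `(vm, p vm)` with slope `-s ^ 2` above the graph of the pressure `p`. -/
def shockDefect (p : ℝ → ℝ) (vm s v : ℝ) : ℝ :=
  -(s ^ 2 * (v - vm)) - (p v - p vm)

/-- The right-hand side of the profile equation solved for the derivative, `V' = F(V)`. -/
noncomputable def profileField (p : ℝ → ℝ) (μ vm s v : ℝ) : ℝ :=
  v * shockDefect p vm s v / (s * μ)

/-- The exponential rate `c_±` at the end state `v = v_±`; `p'` stands for the derivative of the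
pressure. -/
noncomputable def decayRate (p' : ℝ → ℝ) (μ s v : ℝ) : ℝ :=
  v * |p' v + s ^ 2| / (s * μ)

/-- A 2-viscous shock wave profile for an arbitrary pressure law `p`; `IsShockProfile γ` is the
case `p v = v ^ (-γ)`. -/
def IsViscousProfile (p : ℝ → ℝ) (μ vm vp um up s : ℝ) (V U : ℝ → ℝ) : Prop :=
  ContDiff ℝ 2 V ∧ ContDiff ℝ 2 U ∧
  (∀ ξ, 0 < V ξ) ∧
  (∀ ξ, U ξ - up = -(s * (V ξ - vp))) ∧
  (∀ ξ, U ξ - um = -(s * (V ξ - vm))) ∧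
  (∀ ξ, s * μ * deriv V ξ / V ξ = shockDefect p vm s (V ξ)) ∧
  Tendsto V atBot (𝓝 vm) ∧ Tendsto V atTop (𝓝 vp)

section Shock

variable {p p' : ℝ → ℝ} {μ vm vp um up s : ℝ} {V U : ℝ → ℝ}

lemma sq_mul_sub_eq_of_rankineHugoniot (hmass : s * (vp - vm) = um - up)
    (hmomentum : s * (up - um) = p vp - p vm) : s ^ 2 * (vp - vm) = p vm - p vp := by
  linear_combination s * hmass - hmomentum

lemma shockDefect_left : shockDefect p vm s vm = 0 := by simp [shockDefect]

lemma shockDefect_right (hspeed : s ^ 2 * (vp - vm) = p vm - p vp) :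
    shockDefect p vm s vp = 0 := by
  rw [shockDefect, hspeed]
  ring

lemma strictConcaveOn_shockDefect {D : Set ℝ} (hconv : StrictConvexOn ℝ D p) :
    StrictConcaveOn ℝ D (shockDefect p vm s) := by
  refine ⟨hconv.1, fun x hx y hy hxy α β hα hβ hαβ => ?_⟩
  have hp := hconv.2 hx hy hxy hα hβ hαβ
  simp only [shockDefect, smul_eq_mul] at hp ⊢
  linear_combination hp + (s ^ 2 * vm + p vm) * hαβ

lemma shockDefect_pos {D : Set ℝ} (hconv : StrictConvexOn ℝ D p) (hvm : vm ∈ D) (hvp : vp ∈ D)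
    (hspeed : s ^ 2 * (vp - vm) = p vm - p vp) {v : ℝ} (hv : v ∈ Ioo vm vp) :
    0 < shockDefect p vm s v := by
  have hlt : vm < vp := hv.1.trans hv.2
  simpa [shockDefect_left, shockDefect_right hspeed] using
    (strictConcaveOn_shockDefect (vm := vm) (s := s) hconv).lt_on_openSegment hvm hvp hlt.ne
      (by rwa [openSegment_eq_Ioo hlt])

lemma hasDerivAt_shockDefect {v : ℝ} (hp' : HasDerivAt p (p' v) v) :
    HasDerivAt (shockDefect p vm s) (-(p' v + s ^ 2)) v :=
  (((((hasDerivAt_id v).sub_const vm).const_mul (s ^ 2)).fun_neg).sub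
    (hp'.sub_const (p vm))).congr_deriv (by ring)

lemma deriv_profileField {v : ℝ} (hp' : HasDerivAt p (p' v) v) (hv : shockDefect p vm s v = 0) :
    deriv (profileField p μ vm s) v = v * -(p' v + s ^ 2) / (s * μ) := by
  refine (((hasDerivAt_id v).mul (hasDerivAt_shockDefect hp')).div_const (s * μ)).deriv.trans ?_
  simp [hv]

lemma contDiffAt_profileField {n : WithTop ℕ∞} {v : ℝ} (hp : ContDiffAt ℝ n p v) :
    ContDiffAt ℝ n (profileField p μ vm s) v := by
  unfold profileField shockDefect
  fun_prop

lemma decayRate_pos (hμ : 0 < μ) (hs : 0 < s) {v : ℝ} (hv : 0 < v) (h : p' v + s ^ 2 ≠ 0) :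
    0 < decayRate p' μ s v :=
  div_pos (mul_pos hv (abs_pos.2 h)) (mul_pos hs hμ)

lemma slope_eq_neg_sq (hv : vm < vp) (hspeed : s ^ 2 * (vp - vm) = p vm - p vp) :
    slope p vm vp = -s ^ 2 := by
  rw [slope_def_field, div_eq_iff (sub_pos.2 hv).ne']
  linarith

-- The next two inequalities are Lax's shock condition `p'(v_-) < -s² < p'(v_+)`.
lemma deriv_left_add_sq_neg {D : Set ℝ} (hconv : StrictConvexOn ℝ D p) (hvm : vm ∈ D)
    (hvp : vp ∈ D) (hv : vm < vp) (hspeed : s ^ 2 * (vp - vm) = p vm - p vp)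
    (hp' : HasDerivAt p (p' vm) vm) : p' vm + s ^ 2 < 0 := by
  have hslope := hconv.lt_slope_of_hasDerivAt hvm hvp hv hp'
  rw [slope_eq_neg_sq hv hspeed] at hslope
  linarith

lemma deriv_right_add_sq_pos {D : Set ℝ} (hconv : StrictConvexOn ℝ D p) (hvm : vm ∈ D)
    (hvp : vp ∈ D) (hv : vm < vp) (hspeed : s ^ 2 * (vp - vm) = p vm - p vp)
    (hp' : HasDerivAt p (p' vp) vp) : 0 < p' vp + s ^ 2 := by
  have hslope := hconv.slope_lt_of_hasDerivAt hvm hvp hv hp'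
  rw [slope_eq_neg_sq hv hspeed] at hslope
  linarith

lemma deriv_profileField_left {D : Set ℝ} (hconv : StrictConvexOn ℝ D p) (hvm : vm ∈ D)
    (hvp : vp ∈ D) (hv : vm < vp) (hspeed : s ^ 2 * (vp - vm) = p vm - p vp)
    (hp' : HasDerivAt p (p' vm) vm) :
    deriv (profileField p μ vm s) vm = decayRate p' μ s vm := by
  rw [deriv_profileField hp' shockDefect_left, decayRate,
    abs_of_neg (deriv_left_add_sq_neg hconv hvm hvp hv hspeed hp')]

lemma deriv_profileField_right {D : Set ℝ} (hconv : StrictConvexOn ℝ D p) (hvm : vm ∈ D)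
    (hvp : vp ∈ D) (hv : vm < vp) (hspeed : s ^ 2 * (vp - vm) = p vm - p vp)
    (hp' : HasDerivAt p (p' vp) vp) :
    deriv (profileField p μ vm s) vp = -decayRate p' μ s vp := by
  rw [deriv_profileField hp' (shockDefect_right hspeed), decayRate,
    abs_of_pos (deriv_right_add_sq_pos hconv hvm hvp hv hspeed hp')]
  ring

lemma decayRate_left_pos (hp' : HasDerivAt p (p' vm) vm) (hconv : StrictConvexOn ℝ (Ioi 0) p)
    (hμ : 0 < μ) (hvm : 0 < vm) (hv : vm < vp) (hs : 0 < s)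
    (hspeed : s ^ 2 * (vp - vm) = p vm - p vp) : 0 < decayRate p' μ s vm :=
  decayRate_pos hμ hs hvm (deriv_left_add_sq_neg hconv hvm (hvm.trans hv) hv hspeed hp').ne

lemma decayRate_right_pos (hp' : HasDerivAt p (p' vp) vp) (hconv : StrictConvexOn ℝ (Ioi 0) p)
    (hμ : 0 < μ) (hvm : 0 < vm) (hv : vm < vp) (hs : 0 < s)
    (hspeed : s ^ 2 * (vp - vm) = p vm - p vp) : 0 < decayRate p' μ s vp :=
  decayRate_pos hμ hs (hvm.trans hv)
    (deriv_right_add_sq_pos hconv hvm (hvm.trans hv) hv hspeed hp').ne'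

lemma isConnectingField_profileField (hp : ContDiffOn ℝ 2 p (Ioi 0))
    (hp' : ∀ v > 0, HasDerivAt p (p' v) v) (hconv : StrictConvexOn ℝ (Ioi 0) p) (hμ : 0 < μ)
    (hvm : 0 < vm) (hv : vm < vp) (hs : 0 < s) (hspeed : s ^ 2 * (vp - vm) = p vm - p vp) :
    IsConnectingField (profileField p μ vm s) vm vp := by
  have hvp : 0 < vp := hvm.trans hv
  refine ⟨hv, fun v hv => ?_, ?_, ?_, fun v hv => ?_, ?_, ?_⟩
  · exact contDiffAt_profileField (hp.contDiffAt (Ioi_mem_nhds (hvm.trans_le hv.1)))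
  · simp [profileField, shockDefect_left]
  · simp [profileField, shockDefect_right hspeed]
  · exact div_pos (mul_pos (hvm.trans hv.1) (shockDefect_pos hconv hvm hvp hspeed hv))
      (mul_pos hs hμ)
  · rw [deriv_profileField_left hconv hvm hvp hv hspeed (hp' vm hvm)]
    exact decayRate_left_pos (hp' vm hvm) hconv hμ hvm hv hs hspeed
  · rw [deriv_profileField_right hconv hvm hvp hv hspeed (hp' vp hvp)]
    exact neg_neg_of_pos (decayRate_right_pos (hp' vp hvp) hconv hμ hvm hv hs hspeed)

lemma isViscousProfile_iff (hp : ContDiffOn ℝ 1 p (Ioi 0)) (hμ : 0 < μ) (hs : 0 < s)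
    (hmass : s * (vp - vm) = um - up) :
    IsViscousProfile p μ vm vp um up s V U ↔
      IsHeteroclinicOrbit (profileField p μ vm s) vm vp V ∧ (∀ ξ, 0 < V ξ) ∧
        ∀ ξ, U ξ = um - s * (V ξ - vm) := by
  constructor
  · rintro ⟨hV, -, hpos, -, hU, hode, hbot, htop⟩
    refine ⟨⟨fun ξ => ?_, hbot, htop⟩, hpos, fun ξ => by linarith [hU ξ]⟩
    have hV_deriv := (hV.differentiable two_ne_zero ξ).hasDerivAt
    refine hV_deriv.congr_deriv ?_
    have hVne := (hpos ξ).ne'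
    simp only [profileField, ← hode ξ]
    field_simp
  · rintro ⟨⟨hode, hbot, htop⟩, hpos, hU⟩
    have hV : ContDiff ℝ 2 V := contDiff_succ_of_isIntegralCurve (n := 1) hode fun ξ =>
      contDiffAt_profileField (hp.contDiffAt (Ioi_mem_nhds (hpos ξ)))
    refine ⟨hV, ?_, hpos, fun ξ => ?_, fun ξ => ?_, fun ξ => ?_, hbot, htop⟩
    · exact (funext hU : U = _) ▸ contDiff_const.sub (contDiff_const.mul (hV.sub contDiff_const))
    · linear_combination hU ξ - hmass
    · linear_combination hU ξ
    · have hVne := (hpos ξ).ne'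
      simp only [(hode ξ).deriv, profileField]
      field_simp

lemma IsViscousProfile.exists_translation {V₁ V₂ U₁ U₂ : ℝ → ℝ} (hp : ContDiffOn ℝ 1 p (Ioi 0))
    (hμ : 0 < μ) (hs : 0 < s) (hv : vm < vp) (hmass : s * (vp - vm) = um - up)
    (h₁ : IsViscousProfile p μ vm vp um up s V₁ U₁)
    (h₂ : IsViscousProfile p μ vm vp um up s V₂ U₂) :
    ∃ ξ₀, ∀ ξ, V₂ ξ = V₁ (ξ + ξ₀) ∧ U₂ ξ = U₁ (ξ + ξ₀) := by
  obtain ⟨hV₁, hpos₁, hU₁⟩ := (isViscousProfile_iff hp hμ hs hmass).1 h₁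
  obtain ⟨hV₂, hpos₂, hU₂⟩ := (isViscousProfile_iff hp hμ hs hmass).1 h₂
  have hlip : LocallyLipschitzOn (Ioi 0) (profileField p μ vm s) :=
    ContDiffOn.locallyLipschitzOn (convex_Ioi 0) fun v hv =>
      (contDiffAt_profileField (hp.contDiffAt (Ioi_mem_nhds hv))).contDiffWithinAt
  obtain ⟨ξ₀, hξ₀⟩ := hV₁.exists_translation hV₂ hv hlip hpos₁ hpos₂
  exact ⟨ξ₀, fun ξ => ⟨hξ₀ ξ, by rw [hU₁, hU₂, hξ₀]⟩⟩

lemma velocity_mem_Ioo (hs : 0 < s) (hmass : s * (vp - vm) = um - up) {v : ℝ}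
    (hv : v ∈ Ioo vm vp) : um - s * (v - vm) ∈ Ioo up um := by
  obtain ⟨hleft, hright⟩ := hv
  exact ⟨by nlinarith, by nlinarith⟩

lemma eventually_atTop_le_mul {x y : ℝ} (hy : 0 < y) : ∀ᶠ K in atTop, x ≤ K * y :=
  (tendsto_id.atTop_mul_const hy).eventually_ge_atTop x

lemma abs_sub_add_abs_velocity_sub {u v : ℝ} (hs : 0 ≤ s)
    (hU : ∀ ξ, U ξ - u = -(s * (V ξ - v))) (ξ : ℝ) :
    |V ξ - v| + |U ξ - u| = (1 + s) * |V ξ - v| := by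
  rw [hU, abs_neg, abs_mul, abs_of_nonneg hs]
  ring

lemma sum_abs_deriv_velocity_eq {u v : ℝ} (hs : 0 ≤ s)
    (hU : ∀ ξ, U ξ - u = -(s * (V ξ - v))) (ξ : ℝ) :
    |deriv V ξ| + |deriv U ξ| + |deriv (deriv V) ξ| + |deriv (deriv U) ξ| =
      (1 + s) * (|deriv V ξ| + |deriv (deriv V) ξ|) := by
  have hU' : deriv U = fun ξ => -(s * deriv V ξ) := by
    have hU_eq : U = fun ξ => u + -(s * (V ξ - v)) := funext fun ξ => by linarith [hU ξ]
    ext ξ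
    simp [hU_eq]
  have hU'' : deriv (deriv U) ξ = -(s * deriv (deriv V) ξ) := by simp [hU']
  rw [hU'', hU', abs_neg, abs_neg, abs_mul, abs_mul, abs_of_nonneg hs]
  ring

lemma exists_decay_of_isViscousProfile (hp : ContDiffOn ℝ 2 p (Ioi 0))
    (hp' : ∀ v > 0, HasDerivAt p (p' v) v) (hconv : StrictConvexOn ℝ (Ioi 0) p) (hμ : 0 < μ)
    (hvm : 0 < vm) (hv : vm < vp) (hs : 0 < s) (hspeed : s ^ 2 * (vp - vm) = p vm - p vp)
    (hV : IsIntegralCurve V fun _ => profileField p μ vm s) (hmem : ∀ ξ, V ξ ∈ Ioo vm vp) :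
    ∃ C > 0, ∀ um up U, IsViscousProfile p μ vm vp um up s V U →
      (∀ ξ ≥ 0,
        |V ξ - vp| + |U ξ - up| ≤ C * (vp - vm) * exp (-(decayRate p' μ s vp * ξ)) ∧
        |deriv V ξ| + |deriv U ξ| + |deriv (deriv V) ξ| + |deriv (deriv U) ξ| ≤
          C * (vp - vm) ^ 2 * exp (-(decayRate p' μ s vp * ξ))) ∧
      ∀ ξ ≤ 0,
        |V ξ - vm| + |U ξ - um| ≤ C * (vp - vm) * exp (decayRate p' μ s vm * ξ) ∧
        |deriv V ξ| + |deriv U ξ| + |deriv (deriv V) ξ| + |deriv (deriv U) ξ| ≤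
          C * (vp - vm) ^ 2 * exp (decayRate p' μ s vm * ξ) := by
  have hvp : 0 < vp := hvm.trans hv
  have hδ : 0 < vp - vm := sub_pos.2 hv
  obtain ⟨D, -, hright, hleft⟩ :=
    (isConnectingField_profileField hp hp' hconv hμ hvm hv hs hspeed).exists_decay hV hmem
  simp only [deriv_profileField_left hconv hvm hvp hv hspeed (hp' vm hvm),
    deriv_profileField_right hconv hvm hvp hv hspeed (hp' vp hvp), neg_mul] at hright hleft
  obtain ⟨C, hC, hCδ, hCδ2⟩ := ((eventually_gt_atTop 0).and <|
    (eventually_atTop_le_mul (x := (1 + s) * D) hδ).and <|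
      eventually_atTop_le_mul (pow_pos hδ 2)).exists
  have hscale : ∀ {x E B : ℝ}, x ≤ D * exp E → (1 + s) * D ≤ B → (1 + s) * x ≤ B * exp E :=
    fun {x E B} hx hB => by
      calc (1 + s) * x ≤ (1 + s) * (D * exp E) := by gcongr
        _ = (1 + s) * D * exp E := by ring
        _ ≤ B * exp E := by gcongr
  refine ⟨C, hC, fun um up U ⟨_, _, _, hUp, hUm, _⟩ => ⟨fun ξ hξ => ?_, fun ξ hξ => ?_⟩⟩
  · rw [abs_sub_add_abs_velocity_sub hs.le hUp, sum_abs_deriv_velocity_eq hs.le hUp]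
    exact ⟨hscale (hright ξ hξ).1 hCδ, hscale (hright ξ hξ).2 hCδ2⟩
  · rw [abs_sub_add_abs_velocity_sub hs.le hUm, sum_abs_deriv_velocity_eq hs.le hUm]
    exact ⟨hscale (hleft ξ hξ).1 hCδ, hscale (hleft ξ hξ).2 hCδ2⟩

lemma exists_decayRate_comparable (hp' : ∀ v > 0, HasDerivAt p (p' v) v)
    (hconv : StrictConvexOn ℝ (Ioi 0) p) (hμ : 0 < μ) (hvm : 0 < vm) (hv : vm < vp) (hs : 0 < s)
    (hspeed : s ^ 2 * (vp - vm) = p vm - p vp) :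
    ∃ K > 0, 0 < decayRate p' μ s vp ∧ 0 < decayRate p' μ s vm ∧
      decayRate p' μ s vp ≤ K * (vp - vm) ∧ vp - vm ≤ K * decayRate p' μ s vp ∧
      decayRate p' μ s vm ≤ K * (vp - vm) ∧ vp - vm ≤ K * decayRate p' μ s vm := by
  have hδ : 0 < vp - vm := sub_pos.2 hv
  have hright := decayRate_right_pos (hp' vp (hvm.trans hv)) hconv hμ hvm hv hs hspeed
  have hleft := decayRate_left_pos (hp' vm hvm) hconv hμ hvm hv hs hspeed
  obtain ⟨K, hK, h⟩ := ((eventually_gt_atTop 0).and <| (eventually_atTop_le_mul hδ).and <|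
    (eventually_atTop_le_mul hright).and <| (eventually_atTop_le_mul hδ).and <|
      eventually_atTop_le_mul hleft).exists
  exact ⟨K, hK, hright, hleft, h⟩

end Shock

lemma strictConvexOn_rpow_neg {γ : ℝ} (hγ : 0 < γ) :
    StrictConvexOn ℝ (Ioi 0) fun v : ℝ => v ^ (-γ) := by
  refine StrictMonoOn.strictConvexOn_of_deriv (convex_Ioi 0)
    (fun v hv => (continuousAt_rpow_const v _ (.inl (ne_of_gt hv))).continuousWithinAt) ?_
  rw [interior_Ioi]
  intro x hx y _ hxy
  rw [Real.deriv_rpow_const, Real.deriv_rpow_const]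
  nlinarith [rpow_lt_rpow_of_neg hx hxy (by linarith : -γ - 1 < 0)]

theorem viscous_shock_wave_existence_uniqueness_decay_general {p p' : ℝ → ℝ} {μ vm vp : ℝ}
    (hp : ContDiffOn ℝ 2 p (Ioi 0)) (hp' : ∀ v > 0, HasDerivAt p (p' v) v)
    (hconv : StrictConvexOn ℝ (Ioi 0) p) (hμ : 0 < μ) (hvm : 0 < vm) (hv : vm < vp) :
    ∃ C > 0, ∃ K > 0, ∀ um up s : ℝ, 0 < s →
      s * (vp - vm) = um - up → s * (up - um) = p vp - p vm →
      ∃ V U : ℝ → ℝ, IsViscousProfile p μ vm vp um up s V U ∧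
        (∀ V' U' : ℝ → ℝ, IsViscousProfile p μ vm vp um up s V' U' →
          ∃ ξ₀ : ℝ, ∀ ξ, V' ξ = V (ξ + ξ₀) ∧ U' ξ = U (ξ + ξ₀)) ∧
        (∀ ξ : ℝ,
          vm < V ξ ∧ V ξ < vp ∧ up < U ξ ∧ U ξ < um ∧
          0 < shockDefect p vm s (V ξ) ∧
          deriv V ξ = profileField p μ vm s (V ξ) ∧
          0 < deriv V ξ) ∧
        (∀ ξ ≥ 0,
          |V ξ - vp| + |U ξ - up| ≤ C * (vp - vm) * exp (-(decayRate p' μ s vp * ξ)) ∧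
          |deriv V ξ| + |deriv U ξ| + |deriv (deriv V) ξ| + |deriv (deriv U) ξ| ≤
            C * (vp - vm) ^ 2 * exp (-(decayRate p' μ s vp * ξ))) ∧
        (∀ ξ ≤ 0,
          |V ξ - vm| + |U ξ - um| ≤ C * (vp - vm) * exp (decayRate p' μ s vm * ξ) ∧
          |deriv V ξ| + |deriv U ξ| + |deriv (deriv V) ξ| + |deriv (deriv U) ξ| ≤
            C * (vp - vm) ^ 2 * exp (decayRate p' μ s vm * ξ)) ∧
        0 < decayRate p' μ s vp ∧ 0 < decayRate p' μ s vm ∧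
        decayRate p' μ s vp ≤ K * (vp - vm) ∧ vp - vm ≤ K * decayRate p' μ s vp ∧
        decayRate p' μ s vm ≤ K * (vp - vm) ∧ vp - vm ≤ K * decayRate p' μ s vm := by
  -- The end states determine the speed, so constants may be chosen after fixing it.
  by_cases hspeed : ∃ s > 0, s ^ 2 * (vp - vm) = p vm - p vp
  · obtain ⟨s, hs, hspeed⟩ := hspeed
    have hfield := isConnectingField_profileField hp hp' hconv hμ hvm hv hs hspeed
    obtain ⟨V, hV, hmem⟩ := hfield.exists_orbit
    obtain ⟨C, hC, hdecay⟩ := exists_decay_of_isViscousProfile hp hp' hconv hμ hvm hv hs hspeed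
      hV.isIntegralCurve hmem
    obtain ⟨K, hK, hrates⟩ := exists_decayRate_comparable hp' hconv hμ hvm hv hs hspeed
    refine ⟨C, hC, K, hK, fun um up s' hs' hmass hmomentum => ?_⟩
    obtain rfl : s' = s := (pow_left_inj₀ hs'.le hs.le two_ne_zero).1 <|
      mul_right_cancel₀ (sub_pos.2 hv).ne'
        ((sq_mul_sub_eq_of_rankineHugoniot hmass hmomentum).trans hspeed.symm)
    have hp₁ := hp.of_le one_le_two
    have hprofile : IsViscousProfile p μ vm vp um up s' V fun ξ => um - s' * (V ξ - vm) :=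
      (isViscousProfile_iff hp₁ hμ hs hmass).2 ⟨hV, fun ξ => hvm.trans (hmem ξ).1, fun _ => rfl⟩
    refine ⟨V, _, hprofile, fun _ _ => hprofile.exists_translation hp₁ hμ hs hv hmass,
      fun ξ => ?_, (hdecay _ _ _ hprofile).1, (hdecay _ _ _ hprofile).2, hrates⟩
    obtain ⟨hup, hum⟩ := velocity_mem_Ioo hs hmass (hmem ξ)
    have hderiv := (hV.isIntegralCurve ξ).deriv
    have hdefect := shockDefect_pos hconv hvm (hvm.trans hv) hspeed (hmem ξ)
    exact ⟨(hmem ξ).1, (hmem ξ).2, hup, hum, hdefect, hderiv, hderiv ▸ hfield.pos _ (hmem ξ)⟩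
  · exact ⟨1, one_pos, 1, one_pos, fun um up s hs hmass hmomentum =>
      absurd ⟨s, hs, sq_mul_sub_eq_of_rankineHugoniot hmass hmomentum⟩ hspeed⟩

/-- Existence, uniqueness up to translation, and exponential decay estimates for the
2-viscous shock wave of the compressible Navier–Stokes equations. -/
theorem viscous_shock_wave_existence_uniqueness_decay (γ μ vm vp : ℝ)
    (hγ : 1 < γ) (hμ : 0 < μ) (hvm : 0 < vm) (hv : vm < vp) :
    ∃ C > 0, ∃ K > 0, ∀ um up s : ℝ, 0 < s → up < um →
      s * (vp - vm) = um - up → s * (up - um) = vp ^ (-γ) - vm ^ (-γ) →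
      ∃ V U : ℝ → ℝ, IsShockProfile γ μ vm vp um up s V U ∧
        -- uniqueness up to a shift
        (∀ V' U' : ℝ → ℝ, IsShockProfile γ μ vm vp um up s V' U' →
          ∃ ξ₀ : ℝ, ∀ ξ, V' ξ = V (ξ + ξ₀) ∧ U' ξ = U (ξ + ξ₀)) ∧
        -- pointwise bounds and monotonicity
        (∀ ξ : ℝ,
          vm < V ξ ∧ V ξ < vp ∧ up < U ξ ∧ U ξ < um ∧
          0 < -(s ^ 2 * (V ξ - vm)) - (V ξ ^ (-γ) - vm ^ (-γ)) ∧
          deriv V ξ =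
            V ξ * (-(s ^ 2 * (V ξ - vm)) - (V ξ ^ (-γ) - vm ^ (-γ))) / (s * μ) ∧
          0 < deriv V ξ) ∧
        -- exponential decay towards the right state
        (∀ ξ : ℝ, 0 ≤ ξ →
          |V ξ - vp| + |U ξ - up| ≤
            C * (vp - vm) *
              Real.exp (-(vp * |(-(γ * vp ^ (-γ - 1))) + s ^ 2| / (s * μ) * ξ)) ∧
          |deriv V ξ| + |deriv U ξ| + |deriv (deriv V) ξ| + |deriv (deriv U) ξ| ≤
            C * (vp - vm) ^ 2 *
              Real.exp (-(vp * |(-(γ * vp ^ (-γ - 1))) + s ^ 2| / (s * μ) * ξ))) ∧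
        -- exponential decay towards the left state
        (∀ ξ : ℝ, ξ ≤ 0 →
          |V ξ - vm| + |U ξ - um| ≤
            C * (vp - vm) *
              Real.exp (vm * |(-(γ * vm ^ (-γ - 1))) + s ^ 2| / (s * μ) * ξ) ∧
          |deriv V ξ| + |deriv U ξ| + |deriv (deriv V) ξ| + |deriv (deriv U) ξ| ≤
            C * (vp - vm) ^ 2 *
              Real.exp (vm * |(-(γ * vm ^ (-γ - 1))) + s ^ 2| / (s * μ) * ξ)) ∧
        -- positivity of the decay rates and comparability with δ = vp − vm
        (0 < vp * |(-(γ * vp ^ (-γ - 1))) + s ^ 2| / (s * μ) ∧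
         0 < vm * |(-(γ * vm ^ (-γ - 1))) + s ^ 2| / (s * μ) ∧
         vp * |(-(γ * vp ^ (-γ - 1))) + s ^ 2| / (s * μ) ≤ K * (vp - vm) ∧
         vp - vm ≤ K * (vp * |(-(γ * vp ^ (-γ - 1))) + s ^ 2| / (s * μ)) ∧
         vm * |(-(γ * vm ^ (-γ - 1))) + s ^ 2| / (s * μ) ≤ K * (vp - vm) ∧
         vp - vm ≤ K * (vm * |(-(γ * vm ^ (-γ - 1))) + s ^ 2| / (s * μ))) := by
  obtain ⟨C, hC, K, hK, H⟩ := viscous_shock_wave_existence_uniqueness_decay_general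
    (p := fun v => v ^ (-γ)) (p' := fun v => -(γ * v ^ (-γ - 1)))
    (fun v hv => (contDiffAt_rpow_const_of_ne (ne_of_gt hv)).contDiffWithinAt)
    (fun v hv => (hasDerivAt_rpow_const (.inl hv.ne')).congr_deriv (neg_mul _ _))
    (strictConvexOn_rpow_neg (zero_lt_one.trans hγ)) hμ hvm hv
  exact ⟨C, hC, K, hK, fun um up s hs _ => H um up s hs⟩
end

section
/- For every 0 ≤ t ≤ T the following boundary estimates hold: ∫₀^t |φ(τ, 0)| dτ ≲ δ^{−1}e^{−c_−β}; ∫₀^t |φ_ξ(τ, 0)| dτ ≲ e^{−c_−β}; ∫₀^t |ψ_ξ(τ, 0)| dτ ≲ e^{−c_−β}; ∫₀^t |φ_t(τ, 0)| dτ ≲ e^{−c_−β}; ∫₀^t |φ_{tξ}(τ, 0)| dτ ≲ δe^{−c_−β}; and ∫₀^t |ψ_{tξ}(τ, 0)| dτ ≲ δe^{−c_−β}. -/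
open MeasureTheory Real Filter

/-- Partial derivative in the first (time) variable. -/
noncomputable def pt (f : ℝ → ℝ → ℝ) (t ξ : ℝ) : ℝ := deriv (fun τ => f τ ξ) t

/-- Partial derivative in the second (space) variable. -/
noncomputable def px (f : ℝ → ℝ → ℝ) (t ξ : ℝ) : ℝ := deriv (fun y => f t y) ξ

/-- `Φ(a, b) = p(b)(a − b) − ∫_b^a p(η) dη` with `p(v) = v^(−γ)`. -/
noncomputable def Phi (γ a b : ℝ) : ℝ := b ^ (-γ) * (a - b) - ∫ η in b..a, η ^ (-γ)

/-- Square of the `L²` norm on the half line. -/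
noncomputable def nsq (f : ℝ → ℝ) : ℝ := ∫ ξ in Set.Ioi (0:ℝ), (f ξ) ^ 2

/-- The setting of the inflow problem for the compressible Navier–Stokes equations,
reformulated around the (shifted) 2-viscous shock wave profile `(V, U)`. -/
structure NSSetting (γ μ vm vp C₀ K : ℝ) where
  um : ℝ
  up : ℝ
  s : ℝ
  δ : ℝ
  cp : ℝ
  cm : ℝ
  sm : ℝ
  β : ℝ
  σ : ℝ
  T : ℝ
  m : ℝ
  M : ℝ
  N : ℝ
  V : ℝ → ℝ
  U : ℝ → ℝ
  φ : ℝ → ℝ → ℝ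
  ψ : ℝ → ℝ → ℝ
  humpos : 0 < um
  hu : up < um
  hspos : 0 < s
  rh1 : s * (vp - vm) = um - up
  rh2 : s * (up - um) = vp ^ (-γ) - vm ^ (-γ)
  hδ : δ = vp - vm
  subsonic : um < Real.sqrt γ * vm ^ (-(γ - 1) / 2)
  hsm : sm = -(um / vm)
  hVC2 : ContDiff ℝ 2 V
  hUC2 : ContDiff ℝ 2 U
  hUVp : ∀ ξ, U ξ - up = -(s * (V ξ - vp))
  hUVm : ∀ ξ, U ξ - um = -(s * (V ξ - vm))
  hODE : ∀ ξ, s * μ * deriv V ξ / V ξ = -(s ^ 2 * (V ξ - vm)) - (V ξ ^ (-γ) - vm ^ (-γ))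
  hVrange : ∀ ξ, vm < V ξ ∧ V ξ < vp
  hV'pos : ∀ ξ, 0 < deriv V ξ
  hcp : cp = vp * |(-(γ * vp ^ (-γ - 1))) + s ^ 2| / (s * μ)
  hcm : cm = vm * |(-(γ * vm ^ (-γ - 1))) + s ^ 2| / (s * μ)
  decayp : ∀ ξ : ℝ, 0 ≤ ξ →
    |V ξ - vp| + |U ξ - up| ≤ C₀ * δ * Real.exp (-(cp * ξ)) ∧
    |deriv V ξ| + |deriv U ξ| ≤ C₀ * δ ^ 2 * Real.exp (-(cp * ξ))
  decaym : ∀ ξ : ℝ, ξ ≤ 0 →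
    |V ξ - vm| + |U ξ - um| ≤ C₀ * δ * Real.exp (cm * ξ) ∧
    |deriv V ξ| + |deriv U ξ| ≤ C₀ * δ ^ 2 * Real.exp (cm * ξ)
  hKcp : cp ≤ K * δ ∧ δ ≤ K * cp
  hKcm : cm ≤ K * δ ∧ δ ≤ K * cm
  hβpos : 0 < β
  hβσ : |σ| ≤ β
  hσδ : δ * |σ| ≤ K
  hTpos : 0 < T
  hφsm : ContDiff ℝ (⊤ : ℕ∞) (Function.uncurry φ)
  hψsm : ContDiff ℝ (⊤ : ℕ∞) (Function.uncurry ψ)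
  eq1 : ∀ t ξ : ℝ, 0 ≤ t → t ≤ T → 0 ≤ ξ →
    pt φ t ξ - sm * px φ t ξ - px ψ t ξ = 0
  eq2 : ∀ t ξ : ℝ, 0 ≤ t → t ≤ T → 0 ≤ ξ →
    pt ψ t ξ - sm * px ψ t ξ +
        ((V (ξ - (s - sm) * t + σ - β) + px φ t ξ) ^ (-γ) -
          V (ξ - (s - sm) * t + σ - β) ^ (-γ)) =
      μ * ((deriv U (ξ - (s - sm) * t + σ - β) + px (px ψ) t ξ) /
            (V (ξ - (s - sm) * t + σ - β) + px φ t ξ) -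
          deriv U (ξ - (s - sm) * t + σ - β) / V (ξ - (s - sm) * t + σ - β))
  bdφ : ∀ t : ℝ, 0 ≤ t → t ≤ T →
    φ t 0 = -((s - sm) * ∫ τ in Set.Ioi t, (V (-((s - sm) * τ) + σ - β) - vm))
  bdφx : ∀ t : ℝ, 0 ≤ t → t ≤ T → px φ t 0 = vm - V (-((s - sm) * t) + σ - β)
  bdψx : ∀ t : ℝ, 0 ≤ t → t ≤ T → px ψ t 0 = um - U (-((s - sm) * t) + σ - β)
  hInt : ∀ t : ℝ, 0 ≤ t → t ≤ T →
    Integrable (fun ξ => (φ t ξ) ^ 2 + (ψ t ξ) ^ 2 + (px φ t ξ) ^ 2 + (px ψ t ξ) ^ 2 +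
      (px (px φ) t ξ) ^ 2 + (px (px ψ) t ξ) ^ 2 + (px (px (px ψ)) t ξ) ^ 2)
      (volume.restrict (Set.Ioi 0))
  hVanish : ∀ t : ℝ, 0 ≤ t → t ≤ T →
    Tendsto (fun ξ => |φ t ξ| + |ψ t ξ| + |px φ t ξ| + |px ψ t ξ| +
      |px (px φ) t ξ| + |px (px ψ) t ξ|) atTop (nhds 0)
  hm1 : 1 ≤ m
  hM1 : 1 ≤ M
  hvbounds : ∀ t ξ : ℝ, 0 ≤ t → t ≤ T → 0 ≤ ξ →
    1 / m ≤ V (ξ - (s - sm) * t + σ - β) + px φ t ξ ∧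
      V (ξ - (s - sm) * t + σ - β) + px φ t ξ ≤ M
  hN0 : 0 ≤ N
  hN1 : N ≤ 1
  hNbound : ∀ t ξ : ℝ, 0 ≤ t → t ≤ T → 0 ≤ ξ → |φ t ξ| + |ψ t ξ| ≤ N

namespace NSSetting

variable {γ μ vm vp C₀ K : ℝ}

/-- The shifted argument `ξ − (s − sm)t + σ − β`. -/
noncomputable def sh (S : NSSetting γ μ vm vp C₀ K) (t ξ : ℝ) : ℝ :=
  ξ - (S.s - S.sm) * t + S.σ - S.β

/-- The specific volume `v = V + φ_ξ`. -/
noncomputable def vv (S : NSSetting γ μ vm vp C₀ K) (t ξ : ℝ) : ℝ :=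
  S.V (S.sh t ξ) + px S.φ t ξ

/-- `ṽ = v / V`. -/
noncomputable def tv (S : NSSetting γ μ vm vp C₀ K) (t ξ : ℝ) : ℝ :=
  S.vv t ξ / S.V (S.sh t ξ)

/-- `ṽ_ξ / ṽ`. -/
noncomputable def tvr (S : NSSetting γ μ vm vp C₀ K) (t ξ : ℝ) : ℝ :=
  px S.tv t ξ / S.tv t ξ

/-- `E₀ = ‖φ₀‖² + ‖ψ₀‖² + ‖ψ₀′‖² + ∫ Φ(v(0), V(0))`. -/
noncomputable def E₀ (S : NSSetting γ μ vm vp C₀ K) : ℝ :=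
  nsq (S.φ 0) + nsq (S.ψ 0) + nsq (px S.ψ 0) +
    ∫ ξ in Set.Ioi (0:ℝ), Phi γ (S.vv 0 ξ) (S.V (S.sh 0 ξ))

/-- The boundary smallness quantity `δ⁻¹ e^(−c₋ β)`. -/
noncomputable def Xq (S : NSSetting γ μ vm vp C₀ K) : ℝ :=
  S.δ⁻¹ * Real.exp (-(S.cm * S.β))

end NSSetting

/-!
At the boundary `ξ = 0` the shifted profile is evaluated at `σ - β - (s - sm) τ ≤ 0`, on the side
of the left end state, where it is exponentially close to `(vm, um)`. As `cm |σ| ≤ K²`, the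
factor `e^(cm σ)` is harmless, so every boundary trace is `O(e^(-cm β) e^(-(s - sm) cm τ))` times
a power of `δ`: the traces of `φ_ξ` and `ψ_ξ` carry a factor `δ`, each time derivative costs
`s - sm` and gains `δ`, and the antiderivative `φ` loses `cm ∼ δ`. Integrating in time costs
`1 / ((s - sm) cm)`. The speed `s - sm` itself is not bounded above, but it cancels for the time
derivatives, and elsewhere `s - sm ≥ s` suffices, where the Rankine–Hugoniot conditions express
`s` through `γ`, `vm` and `vp`.
-/

section ExponentialDecay

variable {E : Type*} [NormedAddCommGroup E] {f : ℝ → E} {B k t : ℝ}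

lemma integral_exp_neg_mul_le (hk : 0 < k) (t : ℝ) :
    ∫ τ in (0 : ℝ)..t, Real.exp (-(k * τ)) ≤ k⁻¹ := by
  have : 0 ≤ k⁻¹ * Real.exp (-k * t) := by positivity
  simp only [← neg_mul]
  rw [intervalIntegral.integral_comp_mul_left Real.exp (neg_ne_zero.2 hk.ne'), integral_exp,
    smul_eq_mul, mul_zero, Real.exp_zero, inv_neg]
  linarith

lemma integral_norm_le_of_norm_le_exp (ht : 0 ≤ t) (hk : 0 < k) (hB : 0 ≤ B)
    (hf : ∀ τ ∈ Set.Ioo 0 t, ‖f τ‖ ≤ B * Real.exp (-(k * τ))) :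
    ∫ τ in (0 : ℝ)..t, ‖f τ‖ ≤ B / k := by
  have hf_ae : ∀ᵐ τ, τ ∈ Set.Ioc 0 t → ‖‖f τ‖‖ ≤ B * Real.exp (-(k * τ)) := by
    filter_upwards [Measure.ae_ne volume t] with τ hne hτ
    simpa only [norm_norm] using hf τ ⟨hτ.1, hτ.2.lt_of_ne hne⟩
  calc ∫ τ in (0 : ℝ)..t, ‖f τ‖
      ≤ ‖∫ τ in (0 : ℝ)..t, ‖f τ‖‖ := Real.le_norm_self _
    _ ≤ ∫ τ in (0 : ℝ)..t, B * Real.exp (-(k * τ)) :=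
        intervalIntegral.norm_integral_le_of_norm_le ht hf_ae
          (Continuous.intervalIntegrable (by fun_prop) _ _)
    _ = B * ∫ τ in (0 : ℝ)..t, Real.exp (-(k * τ)) := intervalIntegral.integral_const_mul _ _
    _ ≤ B * k⁻¹ := by gcongr; exact integral_exp_neg_mul_le hk t
    _ = B / k := (div_eq_mul_inv B k).symm

lemma norm_integral_Ioi_le_of_norm_le_exp [NormedSpace ℝ E] (hk : 0 < k)
    (hf : ∀ τ ∈ Set.Ioi t, ‖f τ‖ ≤ B * Real.exp (-(k * τ))) :
    ‖∫ τ in Set.Ioi t, f τ‖ ≤ B / k * Real.exp (-(k * t)) := by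
  have hk' : -k < 0 := neg_lt_zero.2 hk
  simp only [← neg_mul] at hf ⊢
  calc ‖∫ τ in Set.Ioi t, f τ‖
      ≤ ∫ τ in Set.Ioi t, B * Real.exp (-k * τ) :=
        norm_integral_le_of_norm_le ((integrableOn_exp_mul_Ioi hk' t).const_mul B)
          (ae_restrict_of_forall_mem measurableSet_Ioi hf)
    _ = B / k * Real.exp (-k * t) := by
        rw [integral_const_mul, integral_exp_mul_Ioi hk']
        field_simp

end ExponentialDecay

/-- The speed that the Rankine–Hugoniot conditions force on a shock joining `vm` to `vp` under
the pressure law `p(v) = v^(-γ)`. -/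
noncomputable def shockSpeed (γ vm vp : ℝ) : ℝ :=
  Real.sqrt ((vm ^ (-γ) - vp ^ (-γ)) / (vp - vm))

namespace NSSetting

variable {γ μ vm vp C₀ K : ℝ} (S : NSSetting γ μ vm vp C₀ K)

/-- The speed `s - s₋` at which the shock recedes from the boundary `ξ = 0`. -/
noncomputable def speed : ℝ := S.s - S.sm

/-- The common rate `(s - s₋) c₋` of decay in time of all the boundary traces. -/
noncomputable def decayRate : ℝ := S.speed * S.cm

/-- The common size of the boundary traces, up to powers of `δ` and `s - s₋`. The factor
`e^(K²)` absorbs `e^(c₋ σ)`. -/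
noncomputable def amplitude : ℝ := C₀ * Real.exp (K ^ 2) * Real.exp (-(S.cm * S.β))

lemma δ_pos : 0 < S.δ := by
  rw [S.hδ]
  refine pos_of_mul_pos_right ?_ S.hspos.le
  rw [S.rh1]
  exact sub_pos.2 S.hu

lemma s_eq_shockSpeed : S.s = shockSpeed γ vm vp := by
  have hδ : 0 < vp - vm := S.hδ ▸ S.δ_pos
  have s_sq : S.s ^ 2 = (vm ^ (-γ) - vp ^ (-γ)) / (vp - vm) := by
    rw [eq_div_iff hδ.ne']
    linear_combination S.s * S.rh1 - S.rh2
  rw [shockSpeed, ← s_sq, Real.sqrt_sq S.hspos.le]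

lemma cm_pos (hK : 0 < K) : 0 < S.cm :=
  pos_of_mul_pos_right (S.δ_pos.trans_le S.hKcm.2) hK.le

lemma s_lt_speed (hvm : 0 < vm) : S.s < S.speed := by
  have : 0 < S.um / vm := div_pos S.humpos hvm
  rw [speed, S.hsm]
  linarith

lemma speed_pos (hvm : 0 < vm) : 0 < S.speed := S.hspos.trans (S.s_lt_speed hvm)

lemma decayRate_pos (hvm : 0 < vm) (hK : 0 < K) : 0 < S.decayRate :=
  mul_pos (S.speed_pos hvm) (S.cm_pos hK)

lemma C₀_nonneg (S : NSSetting γ μ vm vp C₀ K) : 0 ≤ C₀ := by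
  have sum_nonneg := (add_nonneg (abs_nonneg _) (abs_nonneg _)).trans (S.decaym 0 le_rfl).1
  rw [mul_zero, Real.exp_zero, mul_one] at sum_nonneg
  exact nonneg_of_mul_nonneg_left sum_nonneg S.δ_pos

lemma amplitude_nonneg : 0 ≤ S.amplitude := by
  have := S.C₀_nonneg
  unfold amplitude
  positivity

lemma mul_amplitude_le {c D : ℝ} (hc : c ≤ D) :
    c * S.amplitude ≤ C₀ * Real.exp (K ^ 2) * D * Real.exp (-(S.cm * S.β)) :=
  calc c * S.amplitude ≤ D * S.amplitude :=
        mul_le_mul_of_nonneg_right hc S.amplitude_nonneg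
    _ = C₀ * Real.exp (K ^ 2) * D * Real.exp (-(S.cm * S.β)) := by rw [amplitude]; ring

lemma δ_div_cm_le (hK : 0 < K) : S.δ / S.cm ≤ K :=
  (div_le_iff₀ (S.cm_pos hK)).2 S.hKcm.2

lemma inv_decayRate_le (hvm : 0 < vm) (hK : 0 < K) : S.decayRate⁻¹ ≤ K / S.s * S.δ⁻¹ := by
  have hδ := S.δ_pos
  have hs := S.hspos
  have inv_cm_le : S.cm⁻¹ ≤ K * S.δ⁻¹ := by
    have := mul_le_mul_of_nonneg_right (S.δ_div_cm_le hK) (inv_nonneg.2 hδ.le)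
    rwa [div_mul_eq_mul_div, mul_inv_cancel₀ hδ.ne', one_div] at this
  calc S.decayRate⁻¹ = S.speed⁻¹ * S.cm⁻¹ := mul_inv _ _
    _ ≤ S.s⁻¹ * (K * S.δ⁻¹) :=
        mul_le_mul (inv_anti₀ hs (S.s_lt_speed hvm).le) inv_cm_le
          (inv_nonneg.2 (S.cm_pos hK).le) (inv_nonneg.2 hs.le)
    _ = K / S.s * S.δ⁻¹ := by ring

lemma cm_mul_σ_le (hK : 0 < K) : S.cm * S.σ ≤ K ^ 2 :=
  calc S.cm * S.σ ≤ S.cm * |S.σ| :=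
        mul_le_mul_of_nonneg_left (le_abs_self _) (S.cm_pos hK).le
    _ ≤ K * S.δ * |S.σ| := mul_le_mul_of_nonneg_right S.hKcm.1 (abs_nonneg _)
    _ = K * (S.δ * |S.σ|) := mul_assoc _ _ _
    _ ≤ K * K := mul_le_mul_of_nonneg_left S.hσδ hK.le
    _ = K ^ 2 := (sq K).symm

lemma sh_zero (τ : ℝ) : S.sh τ 0 = S.σ - S.β - S.speed * τ := by
  simp only [sh, speed]
  ring

lemma sh_zero_eq_neg_mul_add (τ : ℝ) : S.sh τ 0 = -((S.s - S.sm) * τ) + S.σ - S.β := by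
  rw [sh, zero_sub]

variable {S} {t τ : ℝ}

lemma sh_zero_nonpos (hvm : 0 < vm) (hτ : 0 ≤ τ) : S.sh τ 0 ≤ 0 := by
  have hσβ : S.σ ≤ S.β := (le_abs_self _).trans S.hβσ
  have := mul_nonneg (S.speed_pos hvm).le hτ
  rw [sh_zero]
  linarith

lemma mul_exp_cm_mul_sh_zero_le (hK : 0 < K) (τ : ℝ) :
    C₀ * Real.exp (S.cm * S.sh τ 0) ≤ S.amplitude * Real.exp (-(S.decayRate * τ)) := by
  have exponent_split :
      S.cm * S.sh τ 0 = S.cm * S.σ + (-(S.cm * S.β) + -(S.decayRate * τ)) := by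
    rw [sh_zero, decayRate]
    ring
  have := S.C₀_nonneg
  rw [exponent_split, Real.exp_add, Real.exp_add, amplitude, mul_assoc, mul_assoc]
  gcongr
  exact S.cm_mul_σ_le hK

/-! ### Pointwise bounds on the boundary traces -/

lemma profile_sub_le (hvm : 0 < vm) (hK : 0 < K) (hτ : 0 ≤ τ) :
    |S.V (S.sh τ 0) - vm| + |S.U (S.sh τ 0) - S.um| ≤
      S.δ * S.amplitude * Real.exp (-(S.decayRate * τ)) :=
  calc _ ≤ C₀ * S.δ * Real.exp (S.cm * S.sh τ 0) := (S.decaym _ (sh_zero_nonpos hvm hτ)).1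
    _ = S.δ * (C₀ * Real.exp (S.cm * S.sh τ 0)) := by ring
    _ ≤ S.δ * (S.amplitude * Real.exp (-(S.decayRate * τ))) :=
        mul_le_mul_of_nonneg_left (mul_exp_cm_mul_sh_zero_le hK τ) S.δ_pos.le
    _ = _ := (mul_assoc _ _ _).symm

lemma deriv_profile_le (hvm : 0 < vm) (hK : 0 < K) (hτ : 0 ≤ τ) :
    |deriv S.V (S.sh τ 0)| + |deriv S.U (S.sh τ 0)| ≤
      S.δ * (S.δ * S.amplitude) * Real.exp (-(S.decayRate * τ)) :=
  calc _ ≤ C₀ * S.δ ^ 2 * Real.exp (S.cm * S.sh τ 0) := (S.decaym _ (sh_zero_nonpos hvm hτ)).2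
    _ = S.δ ^ 2 * (C₀ * Real.exp (S.cm * S.sh τ 0)) := by ring
    _ ≤ S.δ ^ 2 * (S.amplitude * Real.exp (-(S.decayRate * τ))) :=
        mul_le_mul_of_nonneg_left (mul_exp_cm_mul_sh_zero_le hK τ) (sq_nonneg _)
    _ = _ := by ring

lemma φ_boundary (hτ : τ ∈ Set.Icc 0 S.T) :
    S.φ τ 0 = -(S.speed * ∫ r in Set.Ioi τ, (S.V (S.sh r 0) - vm)) := by
  simp only [sh_zero_eq_neg_mul_add, speed]
  exact S.bdφ τ hτ.1 hτ.2

lemma px_φ_boundary (hτ : τ ∈ Set.Icc 0 S.T) : px S.φ τ 0 = vm - S.V (S.sh τ 0) := by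
  rw [sh_zero_eq_neg_mul_add, S.bdφx τ hτ.1 hτ.2]

lemma px_ψ_boundary (hτ : τ ∈ Set.Icc 0 S.T) : px S.ψ τ 0 = S.um - S.U (S.sh τ 0) := by
  rw [sh_zero_eq_neg_mul_add, S.bdψx τ hτ.1 hτ.2]

lemma pt_φ_boundary (hτ : τ ∈ Set.Icc 0 S.T) :
    pt S.φ τ 0 = S.speed * (S.V (S.sh τ 0) - vm) := by
  have mass := S.eq1 τ 0 hτ.1 hτ.2 le_rfl
  rw [px_φ_boundary hτ, px_ψ_boundary hτ] at mass
  rw [speed]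
  linear_combination mass - S.hUVm (S.sh τ 0)

lemma deriv_eq_of_forall_eq_sub_profile {f W : ℝ → ℝ} {w : ℝ}
    (hf : ∀ r ∈ Set.Icc 0 S.T, f r = w - W (S.sh r 0)) (hτ : τ ∈ Set.Ioo 0 S.T) :
    deriv f τ = S.speed * deriv W (S.sh τ 0) := by
  have f_near : f =ᶠ[nhds τ] fun r => w - W (S.σ - S.β - S.speed * r) := by
    filter_upwards [Icc_mem_nhds hτ.1 hτ.2] with r hr
    rw [hf r hr, sh_zero]
  rw [f_near.deriv_eq, deriv_const_sub,
    deriv_comp_mul_left S.speed (fun y => W (S.σ - S.β - y)) τ, deriv_comp_const_sub, sh_zero,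
    smul_neg, neg_neg, smul_eq_mul]

lemma abs_φ_le (hvm : 0 < vm) (hK : 0 < K) (hτ : τ ∈ Set.Icc 0 S.T) :
    |S.φ τ 0| ≤ K * S.amplitude * Real.exp (-(S.decayRate * τ)) := by
  have ha := S.speed_pos hvm
  have hcm := S.cm_pos hK
  have hA := S.amplitude_nonneg
  have tail : |∫ r in Set.Ioi τ, (S.V (S.sh r 0) - vm)| ≤
      S.δ * S.amplitude / S.decayRate * Real.exp (-(S.decayRate * τ)) :=
    norm_integral_Ioi_le_of_norm_le_exp (f := fun r => S.V (S.sh r 0) - vm)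
      (S.decayRate_pos hvm hK) fun r hr =>
      (le_add_of_nonneg_right (abs_nonneg _)).trans
        (profile_sub_le hvm hK (hτ.1.trans (Set.mem_Ioi.1 hr).le))
  calc |S.φ τ 0| = S.speed * |∫ r in Set.Ioi τ, (S.V (S.sh r 0) - vm)| := by
        rw [φ_boundary hτ, abs_neg, abs_mul, abs_of_pos ha]
    _ ≤ S.speed * (S.δ * S.amplitude / S.decayRate * Real.exp (-(S.decayRate * τ))) := by
        gcongr
    _ = S.δ / S.cm * S.amplitude * Real.exp (-(S.decayRate * τ)) := by
        rw [decayRate]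
        field_simp
    _ ≤ K * S.amplitude * Real.exp (-(S.decayRate * τ)) := by
        gcongr
        exact S.δ_div_cm_le hK

lemma abs_px_φ_le (hvm : 0 < vm) (hK : 0 < K) (hτ : τ ∈ Set.Icc 0 S.T) :
    |px S.φ τ 0| ≤ S.δ * S.amplitude * Real.exp (-(S.decayRate * τ)) := by
  rw [px_φ_boundary hτ, abs_sub_comm]
  exact (le_add_of_nonneg_right (abs_nonneg _)).trans (profile_sub_le hvm hK hτ.1)

lemma abs_px_ψ_le (hvm : 0 < vm) (hK : 0 < K) (hτ : τ ∈ Set.Icc 0 S.T) :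
    |px S.ψ τ 0| ≤ S.δ * S.amplitude * Real.exp (-(S.decayRate * τ)) := by
  rw [px_ψ_boundary hτ, abs_sub_comm]
  exact (le_add_of_nonneg_left (abs_nonneg _)).trans (profile_sub_le hvm hK hτ.1)

lemma abs_pt_φ_le (hvm : 0 < vm) (hK : 0 < K) (hτ : τ ∈ Set.Icc 0 S.T) :
    |pt S.φ τ 0| ≤ S.speed * (S.δ * S.amplitude) * Real.exp (-(S.decayRate * τ)) := by
  have ha := S.speed_pos hvm
  rw [pt_φ_boundary hτ, abs_mul, abs_of_pos ha, mul_assoc]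
  gcongr
  exact (le_add_of_nonneg_right (abs_nonneg _)).trans (profile_sub_le hvm hK hτ.1)

lemma abs_pt_px_φ_le (hvm : 0 < vm) (hK : 0 < K) (hτ : τ ∈ Set.Ioo 0 S.T) :
    |pt (px S.φ) τ 0| ≤ S.speed * (S.δ * (S.δ * S.amplitude)) * Real.exp (-(S.decayRate * τ)) := by
  have ha := S.speed_pos hvm
  rw [pt, deriv_eq_of_forall_eq_sub_profile (fun _ => px_φ_boundary) hτ, abs_mul,
    abs_of_pos ha, mul_assoc]
  gcongr
  exact (le_add_of_nonneg_right (abs_nonneg _)).trans (deriv_profile_le hvm hK hτ.1.le)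

lemma abs_pt_px_ψ_le (hvm : 0 < vm) (hK : 0 < K) (hτ : τ ∈ Set.Ioo 0 S.T) :
    |pt (px S.ψ) τ 0| ≤ S.speed * (S.δ * (S.δ * S.amplitude)) * Real.exp (-(S.decayRate * τ)) := by
  have ha := S.speed_pos hvm
  rw [pt, deriv_eq_of_forall_eq_sub_profile (fun _ => px_ψ_boundary) hτ, abs_mul,
    abs_of_pos ha, mul_assoc]
  gcongr
  exact (le_add_of_nonneg_left (abs_nonneg _)).trans (deriv_profile_le hvm hK hτ.1.le)

/-! ### Time integrals of the boundary traces -/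

lemma integral_abs_le_of_abs_le_exp {f : ℝ → ℝ} {B : ℝ} (hvm : 0 < vm) (hK : 0 < K)
    (hB : 0 ≤ B) (ht : t ∈ Set.Icc 0 S.T)
    (hf : ∀ τ ∈ Set.Ioo 0 S.T, |f τ| ≤ B * Real.exp (-(S.decayRate * τ))) :
    ∫ τ in (0 : ℝ)..t, |f τ| ≤ K / S.s * B * S.δ⁻¹ :=
  calc ∫ τ in (0 : ℝ)..t, |f τ| ≤ B / S.decayRate :=
        integral_norm_le_of_norm_le_exp (f := f) ht.1 (S.decayRate_pos hvm hK) hB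
          fun τ hτ => hf τ ⟨hτ.1, hτ.2.trans_le ht.2⟩
    _ = B * S.decayRate⁻¹ := div_eq_mul_inv _ _
    _ ≤ B * (K / S.s * S.δ⁻¹) := mul_le_mul_of_nonneg_left (S.inv_decayRate_le hvm hK) hB
    _ = K / S.s * B * S.δ⁻¹ := by ring

lemma integral_abs_le_of_abs_le_speed_mul_exp {f : ℝ → ℝ} {B : ℝ} (hvm : 0 < vm) (hK : 0 < K)
    (hB : 0 ≤ B) (ht : t ∈ Set.Icc 0 S.T)
    (hf : ∀ τ ∈ Set.Ioo 0 S.T,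
      |f τ| ≤ S.speed * (S.δ * B) * Real.exp (-(S.decayRate * τ))) :
    ∫ τ in (0 : ℝ)..t, |f τ| ≤ K * B := by
  have ha := S.speed_pos hvm
  have hδ := S.δ_pos
  calc ∫ τ in (0 : ℝ)..t, |f τ| ≤ S.speed * (S.δ * B) / S.decayRate :=
        integral_norm_le_of_norm_le_exp (f := f) ht.1 (S.decayRate_pos hvm hK) (by positivity)
          fun τ hτ => hf τ ⟨hτ.1, hτ.2.trans_le ht.2⟩
    _ = S.δ / S.cm * B := by
        rw [decayRate, mul_div_mul_left _ _ ha.ne', div_mul_eq_mul_div]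
    _ ≤ K * B := mul_le_mul_of_nonneg_right (S.δ_div_cm_le hK) hB

lemma integral_abs_φ_le (hvm : 0 < vm) (hK : 0 < K) (ht : t ∈ Set.Icc 0 S.T) :
    ∫ τ in (0 : ℝ)..t, |S.φ τ 0| ≤ K ^ 2 / S.s * S.amplitude * S.δ⁻¹ := by
  convert integral_abs_le_of_abs_le_exp hvm hK (mul_nonneg hK.le S.amplitude_nonneg) ht
    fun τ hτ => abs_φ_le hvm hK (Set.Ioo_subset_Icc_self hτ) using 2
  ring

lemma integral_abs_px_φ_le (hvm : 0 < vm) (hK : 0 < K) (ht : t ∈ Set.Icc 0 S.T) :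
    ∫ τ in (0 : ℝ)..t, |px S.φ τ 0| ≤ K / S.s * S.amplitude := by
  have hδ := S.δ_pos
  convert integral_abs_le_of_abs_le_exp hvm hK (mul_nonneg hδ.le S.amplitude_nonneg) ht
    fun τ hτ => abs_px_φ_le hvm hK (Set.Ioo_subset_Icc_self hτ) using 1
  field_simp

lemma integral_abs_px_ψ_le (hvm : 0 < vm) (hK : 0 < K) (ht : t ∈ Set.Icc 0 S.T) :
    ∫ τ in (0 : ℝ)..t, |px S.ψ τ 0| ≤ K / S.s * S.amplitude := by
  have hδ := S.δ_pos
  convert integral_abs_le_of_abs_le_exp hvm hK (mul_nonneg hδ.le S.amplitude_nonneg) ht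
    fun τ hτ => abs_px_ψ_le hvm hK (Set.Ioo_subset_Icc_self hτ) using 1
  field_simp

lemma integral_abs_pt_φ_le (hvm : 0 < vm) (hK : 0 < K) (ht : t ∈ Set.Icc 0 S.T) :
    ∫ τ in (0 : ℝ)..t, |pt S.φ τ 0| ≤ K * S.amplitude :=
  integral_abs_le_of_abs_le_speed_mul_exp hvm hK S.amplitude_nonneg ht
    fun _ hτ => abs_pt_φ_le hvm hK (Set.Ioo_subset_Icc_self hτ)

lemma integral_abs_pt_px_φ_le (hvm : 0 < vm) (hK : 0 < K) (ht : t ∈ Set.Icc 0 S.T) :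
    ∫ τ in (0 : ℝ)..t, |pt (px S.φ) τ 0| ≤ K * S.amplitude * S.δ := by
  rw [mul_assoc, mul_comm S.amplitude]
  exact integral_abs_le_of_abs_le_speed_mul_exp hvm hK
    (mul_nonneg S.δ_pos.le S.amplitude_nonneg) ht fun _ => abs_pt_px_φ_le hvm hK

lemma integral_abs_pt_px_ψ_le (hvm : 0 < vm) (hK : 0 < K) (ht : t ∈ Set.Icc 0 S.T) :
    ∫ τ in (0 : ℝ)..t, |pt (px S.ψ) τ 0| ≤ K * S.amplitude * S.δ := by
  rw [mul_assoc, mul_comm S.amplitude]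
  exact integral_abs_le_of_abs_le_speed_mul_exp hvm hK
    (mul_nonneg S.δ_pos.le S.amplitude_nonneg) ht fun _ => abs_pt_px_ψ_le hvm hK

end NSSetting

theorem boundary_term_estimates_general (γ μ vm vp C₀ K : ℝ)
    (hvm : 0 < vm) (hC₀ : 0 < C₀) (hK : 0 < K) :
    ∃ C > 0, ∀ S : NSSetting γ μ vm vp C₀ K, ∀ t : ℝ, 0 ≤ t → t ≤ S.T →
      (∫ τ in (0:ℝ)..t, |S.φ τ 0|) ≤ C * S.δ⁻¹ * Real.exp (-(S.cm * S.β)) ∧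
      (∫ τ in (0:ℝ)..t, |px S.φ τ 0|) ≤ C * Real.exp (-(S.cm * S.β)) ∧
      (∫ τ in (0:ℝ)..t, |px S.ψ τ 0|) ≤ C * Real.exp (-(S.cm * S.β)) ∧
      (∫ τ in (0:ℝ)..t, |pt S.φ τ 0|) ≤ C * Real.exp (-(S.cm * S.β)) ∧
      (∫ τ in (0:ℝ)..t, |pt (px S.φ) τ 0|) ≤ C * S.δ * Real.exp (-(S.cm * S.β)) ∧
      (∫ τ in (0:ℝ)..t, |pt (px S.ψ) τ 0|) ≤ C * S.δ * Real.exp (-(S.cm * S.β)) := by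
  have hs₀ : 0 ≤ shockSpeed γ vm vp := Real.sqrt_nonneg _
  set s₀ := shockSpeed γ vm vp
  have hφ : 0 ≤ K ^ 2 / s₀ := by positivity
  have hφx : 0 ≤ K / s₀ := by positivity
  let D := K ^ 2 / s₀ + K / s₀ + K
  refine ⟨C₀ * Real.exp (K ^ 2) * D, by positivity, fun S t h0 hT => ?_⟩
  have ht : t ∈ Set.Icc 0 S.T := ⟨h0, hT⟩
  have hs : S.s = s₀ := S.s_eq_shockSpeed
  have hδ := S.δ_pos.le
  have bound_φ := S.mul_amplitude_le (show K ^ 2 / S.s ≤ D by rw [hs]; linarith)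
  have bound_φx := S.mul_amplitude_le (show K / S.s ≤ D by rw [hs]; linarith)
  have bound_t := S.mul_amplitude_le (show K ≤ D by linarith)
  simp only [mul_right_comm _ S.δ⁻¹, mul_right_comm _ S.δ]
  exact ⟨(NSSetting.integral_abs_φ_le hvm hK ht).trans (by gcongr),
    (NSSetting.integral_abs_px_φ_le hvm hK ht).trans bound_φx,
    (NSSetting.integral_abs_px_ψ_le hvm hK ht).trans bound_φx,
    (NSSetting.integral_abs_pt_φ_le hvm hK ht).trans bound_t,
    (NSSetting.integral_abs_pt_px_φ_le hvm hK ht).trans (by gcongr),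
    (NSSetting.integral_abs_pt_px_ψ_le hvm hK ht).trans (by gcongr)⟩

/-- Boundary estimates: the time integrals of the boundary traces of `φ`, `φ_ξ`, `ψ_ξ`,
`φ_t`, `φ_{tξ}`, `ψ_{tξ}` are controlled by `δ⁻¹e^(−c₋β)`, `e^(−c₋β)`, `e^(−c₋β)`,
`e^(−c₋β)`, `δe^(−c₋β)`, `δe^(−c₋β)` respectively. -/
theorem boundary_term_estimates (γ μ vm vp C₀ K : ℝ) (hγ : 1 < γ) (hμ : 0 < μ)
    (hvm : 0 < vm) (hv : vm < vp) (hC₀ : 0 < C₀) (hK : 0 < K) :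
    ∃ C > 0, ∀ S : NSSetting γ μ vm vp C₀ K, ∀ t : ℝ, 0 ≤ t → t ≤ S.T →
      (∫ τ in (0:ℝ)..t, |S.φ τ 0|) ≤ C * S.δ⁻¹ * Real.exp (-(S.cm * S.β)) ∧
      (∫ τ in (0:ℝ)..t, |px S.φ τ 0|) ≤ C * Real.exp (-(S.cm * S.β)) ∧
      (∫ τ in (0:ℝ)..t, |px S.ψ τ 0|) ≤ C * Real.exp (-(S.cm * S.β)) ∧
      (∫ τ in (0:ℝ)..t, |pt S.φ τ 0|) ≤ C * Real.exp (-(S.cm * S.β)) ∧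
      (∫ τ in (0:ℝ)..t, |pt (px S.φ) τ 0|) ≤ C * S.δ * Real.exp (-(S.cm * S.β)) ∧
      (∫ τ in (0:ℝ)..t, |pt (px S.ψ) τ 0|) ≤ C * S.δ * Real.exp (-(S.cm * S.β)) :=
  boundary_term_estimates_general γ μ vm vp C₀ K hvm hC₀ hK
end
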